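/- A normal dually weakly Lindelöf space with a G_delta-diagonal of rank 2 has cardinality at most 2^{aleph_0}. -/

import Mathlib

def star' {X : Type*} (U : Set (Set X)) (x : X) : Set X := ⋃₀ {u ∈ U | x ∈ u}

def st2 {X : Type*} (U : Set (Set X)) (x : X) : Set X :=
  ⋃₀ {u ∈ U | (u ∩ star' U x).Nonempty}

/-- A space is weakly Lindelöf if every open cover has a countable subfamily
with dense union. -/
def WeaklyLindelof (X : Type*) [TopologicalSpace X] : Prop :=
  ∀ 𝒰 : Set (Set X), (∀ u ∈ 𝒰, IsOpen u) → ⋃₀ 𝒰 = Set.univ →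
    ∃ 𝒱 ⊆ 𝒰, 𝒱.Countable ∧ Dense (⋃₀ 𝒱)

/-- A space is dually weakly Lindelöf if every neighbourhood assignment has a
weakly Lindelöf kernel. -/
def DuallyWeaklyLindelof (X : Type*) [TopologicalSpace X] : Prop :=
  ∀ φ : X → Set X, (∀ x, IsOpen (φ x) ∧ x ∈ φ x) →
    ∃ Y : Set X, WeaklyLindelof Y ∧ ⋃ y ∈ Y, φ y = Set.univ

/-!
Join `x ≠ y` in the `k`-th graph when their stars with respect to `U k` are disjoint; by rank 2,
every two distinct points are joined in some graph, so by the Erdős–Rado theorem it is enough that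
every clique `S` of each graph is countable. Such an `S` is closed and discrete, and so lies in
every kernel of the neighbourhood assignment `x ↦ (S \ {x})ᶜ`, in particular in a weakly Lindelöf
one. By normality the disjoint stars of the points of `S` shrink to a locally finite family of open
neighbourhoods, and a weakly Lindelöf space admits only countably many of these.

For the Erdős–Rado theorem, close off a set `M` of size at most `2 ^ κ` under choosing witnesses for
conditions on `κ` parameters. If `x ∉ M`, take a maximal clique of each colour among the points of
`M` joined to `x` in that colour; a witness `y ∈ M` joined to all these cliques as `x` is would
enlarge the clique in a colour joining `x` and `y`.
-/

section ErdosRado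

open Cardinal Function Set

universe u

theorem exists_mk_le_closed {X α : Type u} {β : α → Type u} (F : ∀ a, (β a → X) → X)
    {κ : Cardinal.{u}} (hκ : sum (fun a => κ ^ #(β a)) ≤ κ) :
    ∃ M : Set X, #M ≤ κ ∧ ∀ a s, (∀ b, s b ∈ M) → F a s ∈ M := by
  let eval : WType β → X := WType.elim X fun t => F t.1 t.2
  refine ⟨range eval, mk_range_le.trans (WType.cardinalMk_le_of_le' (by simpa using hκ)), ?_⟩
  intro a s hs
  choose t ht using hs
  exact ⟨WType.mk a t, congrArg (F a) (funext ht)⟩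

theorem sum_two_power_power_le {α : Type u} {κ : Cardinal.{u}} (hκ : ℵ₀ ≤ κ) (hα : #α ≤ 2 ^ κ)
    {c : α → Cardinal.{u}} (hc : ∀ a, c a ≤ κ) : sum (fun a => (2 ^ κ) ^ c a) ≤ 2 ^ κ := by
  calc
    sum (fun a => (2 ^ κ) ^ c a) ≤ sum fun _ : α => 2 ^ κ := sum_le_sum _ _ fun a => by
      rw [← power_mul]
      exact power_le_power_left two_ne_zero (mul_le_of_le hκ le_rfl (hc a))
    _ = #α * 2 ^ κ := sum_const' _ _
    _ ≤ 2 ^ κ := mul_le_of_le (hκ.trans (cantor κ).le) hα le_rfl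

variable {X ι : Type u} {κ : Cardinal.{u}}

theorem exists_mk_le_two_power_reflecting (hκ : ℵ₀ ≤ κ) (hι : #ι ≤ κ) (N : ι → X → Set X) :
    ∃ M : Set X, #M ≤ 2 ^ κ ∧ ∀ A : ι → Set X, (∀ i, A i ⊆ M) → (∀ i, #(A i) ≤ κ) →
      ∀ x, (∀ i, A i ⊆ N i x) → ∃ y ∈ M, ∀ i, A i ⊆ N i y := by
  rcases isEmpty_or_nonempty X with _ | _
  · exact ⟨∅, by simp, fun _ _ _ x => isEmptyElim x⟩
  induction κ using Cardinal.inductionOn with | _ K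
  have : Nonempty K := (infinite_iff.2 hκ).nonempty
  -- The sets `A i` are coded by `T = {i | (A i).Nonempty}` and enumerations `s (i, ·)` of `A i`.
  let F (T : Set ι) (s : T × K → X) : X := Classical.epsilon fun y => ∀ p, s p ∈ N p.1 y
  have harity (T : Set ι) : #(T × K) ≤ #K := by
    rw [mk_prod, lift_id, lift_id]
    exact mul_le_of_le hκ ((mk_set_le T).trans hι) le_rfl
  have hcodes : #(Set ι) ≤ 2 ^ #K := mk_set.trans_le (power_le_power_left two_ne_zero hι)
  obtain ⟨M, hM, hF⟩ := exists_mk_le_closed F (sum_two_power_power_le hκ hcodes harity)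
  refine ⟨M, hM, fun A hAM hAκ x hx => ?_⟩
  have henum (i : {i | (A i).Nonempty}) : ∃ f : K → A i, Surjective f :=
    exists_surjective_iff.2 ⟨⟨fun _ => ⟨_, i.2.some_mem⟩⟩, hAκ i⟩
  choose f hf using henum
  let s (p : {i | (A i).Nonempty} × K) : X := f p.1 p.2
  have hFs : ∀ p, s p ∈ N p.1 (F _ s) :=
    Classical.epsilon_spec (p := fun y => ∀ p, s p ∈ N p.1 y) ⟨x, fun p => hx _ (f p.1 p.2).2⟩
  refine ⟨F _ s, hF _ s fun p => hAM _ (f p.1 p.2).2, fun i a ha => ?_⟩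
  obtain ⟨k, hk⟩ := hf ⟨i, a, ha⟩ ⟨a, ha⟩
  simpa only [s, hk] using hFs (⟨i, a, ha⟩, k)

theorem exists_maximal_isClique_subset (G : SimpleGraph X) (T : Set X) :
    ∃ A, Maximal (fun A => A ⊆ T ∧ G.IsClique A) A :=
  zorn_subset {A | A ⊆ T ∧ G.IsClique A} fun c hc hchain =>
    ⟨⋃₀ c, ⟨sUnion_subset fun _ hA => (hc hA).1,
      (pairwise_sUnion hchain.directedOn).2 fun _ hA => (hc hA).2⟩,
      fun _ hA => subset_sUnion_of_mem hA⟩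

/-- The Erdős–Rado partition relation `(2 ^ κ)⁺ → (κ⁺)²_κ`, with colour classes allowed to
overlap. -/
theorem mk_le_two_power_of_forall_isClique_mk_le (hκ : ℵ₀ ≤ κ) (hι : #ι ≤ κ)
    (G : ι → SimpleGraph X) (hG : ⨆ i, G i = ⊤)
    (hclique : ∀ i A, (G i).IsClique A → #A ≤ κ) : #X ≤ 2 ^ κ := by
  obtain ⟨M, hMκ, hM⟩ :=
    exists_mk_le_two_power_reflecting hκ hι fun i x => (G i).neighborSet x
  suffices hMuniv : M = Set.univ by rwa [hMuniv, mk_univ] at hMκ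
  refine eq_univ_of_forall fun x => ?_
  by_contra hx
  choose A hA using fun i => exists_maximal_isClique_subset (G i) (M ∩ (G i).neighborSet x)
  obtain ⟨y, hyM, hy⟩ := hM A (fun i a ha => ((hA i).prop.1 ha).1)
    (fun i => hclique i _ (hA i).prop.2) x fun i a ha => ((hA i).prop.1 ha).2
  obtain ⟨i, hi⟩ : ∃ i, (G i).Adj x y := by
    rw [← SimpleGraph.iSup_adj, hG, SimpleGraph.top_adj]
    exact (ne_of_mem_of_not_mem hyM hx).symm
  have hinsert : insert y (A i) ⊆ M ∩ (G i).neighborSet x ∧ (G i).IsClique (insert y (A i)) :=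
    ⟨insert_subset ⟨hyM, hi⟩ (hA i).prop.1, (hA i).prop.2.insert fun _ ha _ => hy i ha⟩
  have hyA : y ∈ A i := (hA i).2 hinsert (subset_insert _ _) (mem_insert _ _)
  exact (G i).irrefl (hy i hyA)

end ErdosRado

section WeaklyLindelof

open Set Topology

variable {X : Type*} [TopologicalSpace X]

theorem WeaklyLindelof.countable_of_locallyFinite {ι : Type*} (hX : WeaklyLindelof X)
    {W : ι → Set X} (hWo : ∀ i, IsOpen (W i)) (hne : ∀ i, (W i).Nonempty)
    (hW : LocallyFinite W) : Countable ι := by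
  obtain ⟨𝒱, h𝒱, h𝒱c, h𝒱d⟩ := hX {v | IsOpen v ∧ {i | (W i ∩ v).Nonempty}.Finite}
    (fun _ hv => hv.1) (eq_univ_of_forall fun x => by
      obtain ⟨t, ht, hfin⟩ := hW x
      obtain ⟨v, hvt, hvo, hxv⟩ := mem_nhds_iff.1 ht
      exact ⟨v, ⟨hvo, hfin.subset fun i hi => hi.mono (inter_subset_inter_right _ hvt)⟩, hxv⟩)
  refine countable_univ_iff.1 <|
    (h𝒱c.biUnion fun v hv => (h𝒱 hv).2.countable).mono fun i _ => ?_
  obtain ⟨x, hxi, v, hv, hxv⟩ := h𝒱d.inter_open_nonempty _ (hWo i) (hne i)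
  exact mem_biUnion hv ⟨x, hxi, hxv⟩

theorem DuallyWeaklyLindelof.exists_weaklyLindelof_superset (hX : DuallyWeaklyLindelof X)
    {S : Set X} (hS : IsClosed S) (hSd : IsDiscrete S) : ∃ Y, S ⊆ Y ∧ WeaklyLindelof Y := by
  obtain ⟨Y, hY, hker⟩ := hX (fun x => (S \ {x})ᶜ) fun x =>
    ⟨(isClosed_of_subset_discrete_closed sdiff_subset hSd hS).isOpen_compl, fun h => h.2 rfl⟩
  refine ⟨Y, fun x hx => ?_, hY⟩
  obtain ⟨y, hyY, hxy⟩ := mem_iUnion₂.1 (hker ▸ mem_univ x)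
  have hxeq : x = y := by_contra fun hne => hxy ⟨hx, hne⟩
  exact hxeq ▸ hyY

theorem exists_locallyFinite_isOpen_expansion [NormalSpace X] {S : Set X} (hS : IsClosed S)
    {O : X → Set X} (hO : ∀ x ∈ S, IsOpen (O x)) (hmem : ∀ x ∈ S, x ∈ O x)
    (hdisj : S.PairwiseDisjoint O) :
    ∃ W : S → Set X, (∀ x, IsOpen (W x)) ∧ (∀ x : S, (x : X) ∈ W x) ∧ LocallyFinite W := by
  obtain ⟨V, hVo, hSV, hVc⟩ := normal_exists_closure_subset hS
    (isOpen_biUnion hO) fun x hx => mem_biUnion hx (hmem x hx)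
  refine ⟨fun x => V ∩ O x, fun x => hVo.inter (hO x x.2), fun x => ⟨hSV x.2, hmem x x.2⟩,
    fun z => ?_⟩
  by_cases hz : z ∈ closure V
  · obtain ⟨x, hx, hzx⟩ := mem_iUnion₂.1 (hVc hz)
    refine ⟨O x, (hO x hx).mem_nhds hzx, (finite_singleton ⟨x, hx⟩).subset ?_⟩
    rintro y ⟨t, ⟨-, hty⟩, htx⟩
    exact Subtype.ext (hdisj.elim_set y.2 hx t hty htx)
  · refine ⟨(closure V)ᶜ, isClosed_closure.isOpen_compl.mem_nhds hz, finite_empty.subset ?_⟩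
    rintro y ⟨t, ⟨htV, -⟩, ht⟩
    exact ht (subset_closure htV)

theorem isDiscrete_of_pairwiseDisjoint_isOpen {S : Set X} {O : X → Set X}
    (hO : ∀ x ∈ S, IsOpen (O x)) (hmem : ∀ x ∈ S, x ∈ O x) (hdisj : S.PairwiseDisjoint O) :
    IsDiscrete S := by
  refine isDiscrete_iff_forall_mem_exists_isOpen.2 fun x hx => ⟨O x, hO x hx, ?_⟩
  refine subset_antisymm ?_ (singleton_subset_iff.2 ⟨hmem x hx, hx⟩)
  exact fun y hy => hdisj.elim_set hy.2 hx y (hmem y hy.2) hy.1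

theorem DuallyWeaklyLindelof.countable_of_pairwiseDisjoint_isOpen [NormalSpace X]
    (hX : DuallyWeaklyLindelof X) {S : Set X} (hS : IsClosed S) {O : X → Set X}
    (hO : ∀ x ∈ S, IsOpen (O x)) (hmem : ∀ x ∈ S, x ∈ O x) (hdisj : S.PairwiseDisjoint O) :
    S.Countable := by
  have hSd : IsDiscrete S := isDiscrete_of_pairwiseDisjoint_isOpen hO hmem hdisj
  obtain ⟨Y, hSY, hY⟩ := hX.exists_weaklyLindelof_superset hS hSd
  obtain ⟨W, hWo, hmemW, hW⟩ := exists_locallyFinite_isOpen_expansion hS hO hmem hdisj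
  exact hY.countable_of_locallyFinite (fun x => (hWo x).preimage continuous_subtype_val)
    (fun x => ⟨⟨x, hSY x.2⟩, hmemW x⟩) (hW.preimage_continuous continuous_subtype_val)

theorem isClosed_of_forall_exists_nhds_finite_inter [T1Space X] {S : Set X}
    (hS : ∀ x, ∃ u ∈ 𝓝 x, (u ∩ S).Finite) : IsClosed S := by
  refine isOpen_compl_iff.1 (isOpen_iff_mem_nhds.2 fun x hx => ?_)
  obtain ⟨u, hu, hfin⟩ := hS x
  have hcompl : (u ∩ S)ᶜ ∈ 𝓝 x := hfin.isClosed.compl_mem_nhds fun h => hx h.2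
  filter_upwards [hu, hcompl] with y hyu hy hyS using hy ⟨hyu, hyS⟩

end WeaklyLindelof

section Star

open Set Topology

variable {X : Type*} {U : Set (Set X)}

theorem mem_star'_self (hcov : ⋃₀ U = univ) (x : X) : x ∈ star' U x := by
  obtain ⟨u, hu, hxu⟩ := mem_sUnion.1 (hcov ▸ mem_univ x)
  exact ⟨u, ⟨hu, hxu⟩, hxu⟩

theorem mem_st2_iff {x y : X} : y ∈ st2 U x ↔ ¬Disjoint (star' U x) (star' U y) := by
  rw [not_disjoint_iff]
  constructor
  · rintro ⟨u, ⟨hu, z, hzu, hzx⟩, hyu⟩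
    exact ⟨z, hzx, u, ⟨hu, hyu⟩, hzu⟩
  · rintro ⟨z, hzx, u, ⟨hu, hyu⟩, hzu⟩
    exact ⟨u, ⟨hu, z, hzu, hzx⟩, hyu⟩

theorem subsingleton_inter_of_pairwiseDisjoint_star' {S u : Set X}
    (hS : S.PairwiseDisjoint (star' U)) (hu : u ∈ U) : (u ∩ S).Subsingleton :=
  fun _ ha _ hb => hS.elim_set ha.2 hb.2 _ ⟨u, ⟨hu, ha.1⟩, ha.1⟩ ⟨u, ⟨hu, hb.1⟩, ha.1⟩

/-- The graph joining distinct points whose stars with respect to `U` are disjoint; by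
`mem_st2_iff`, its edges are the pairs of points that `st2 U` separates. These graphs are the colour
classes to which the Erdős–Rado theorem is applied. -/
def disjointStarGraph (U : Set (Set X)) : SimpleGraph X where
  Adj x y := x ≠ y ∧ Disjoint (star' U x) (star' U y)
  symm := ⟨fun _ _ h => ⟨h.1.symm, h.2.symm⟩⟩
  loopless := ⟨fun _ h => h.1 rfl⟩

theorem iSup_disjointStarGraph_eq_top {ι : Type*} {𝒰 : ι → Set (Set X)}
    (h𝒰 : ∀ x, ⋂ k, st2 (𝒰 k) x ⊆ {x}) : ⨆ k, disjointStarGraph (𝒰 k) = ⊤ := by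
  refine eq_top_iff.2 fun x y (hxy : x ≠ y) => SimpleGraph.iSup_adj.2 ?_
  have hy : y ∉ ⋂ k, st2 (𝒰 k) x := fun h => hxy (h𝒰 x h).symm
  obtain ⟨k, hk⟩ := not_forall.1 (mt mem_iInter.2 hy)
  exact ⟨k, hxy, not_not.1 (mt mem_st2_iff.2 hk)⟩

variable [TopologicalSpace X]

theorem isOpen_star' (hopen : ∀ u ∈ U, IsOpen u) (x : X) : IsOpen (star' U x) :=
  isOpen_sUnion fun u hu => hopen u hu.1

theorem DuallyWeaklyLindelof.countable_of_isClique_disjointStarGraph [T1Space X] [NormalSpace X]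
    (hX : DuallyWeaklyLindelof X) (hopen : ∀ u ∈ U, IsOpen u) (hcov : ⋃₀ U = univ) {S : Set X}
    (hS : (disjointStarGraph U).IsClique S) : S.Countable := by
  have hdisj : S.PairwiseDisjoint (star' U) := hS.mono' fun _ _ h => h.2
  have hfin : ∀ x, ∃ u ∈ 𝓝 x, (u ∩ S).Finite := fun x => by
    obtain ⟨u, hu, hxu⟩ := mem_sUnion.1 (hcov ▸ mem_univ x)
    exact ⟨u, (hopen u hu).mem_nhds hxu,
      (subsingleton_inter_of_pairwiseDisjoint_star' hdisj hu).finite⟩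
  exact hX.countable_of_pairwiseDisjoint_isOpen (isClosed_of_forall_exists_nhds_finite_inter hfin)
    (fun x _ => isOpen_star' hopen x) (fun x _ => mem_star'_self hcov x) hdisj

end Star

/-- A normal dually weakly Lindelöf space with a G_δ-diagonal of rank 2 has
cardinality at most `2^ℵ₀`. -/
theorem stmt4 {X : Type*} [TopologicalSpace X] [T1Space X] [NormalSpace X]
    (hdual : DuallyWeaklyLindelof X)
    (U : ℕ → Set (Set X))
    (hopen : ∀ k, ∀ u ∈ U k, IsOpen u)
    (hcov : ∀ k, ⋃₀ (U k) = Set.univ)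
    (hrank2 : ∀ x : X, ⋂ k, st2 (U k) x = {x}) :
    Cardinal.mk X ≤ 2 ^ Cardinal.aleph0 := by
  refine mk_le_two_power_of_forall_isClique_mk_le le_rfl (by simp)
    (fun k : ULift ℕ => disjointStarGraph (U k.down)) ?_ fun k S hS => ?_
  · rw [iSup_ulift]
    exact iSup_disjointStarGraph_eq_top fun x => (hrank2 x).subset
  · exact Set.Countable.le_aleph0 <|
      hdual.countable_of_isClique_disjointStarGraph (hopen k.down) (hcov k.down) hS
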